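/- Let s > 2, ε, μ ∈ (0,1] and h₀ ∈ (0,1). There exist constants c₁, c₂ > 0, depending only on s (in particular independent of ε, μ, h₀), such that for all Schwartz functions η : ℝ² → ℝ and v = (v₁,v₂) : ℝ² → ℝ² with 1 + ε η(x) ≥ h₀ for all x ∈ ℝ², the energy E_s(η,v) = ∫_{ℝ²} [ (J^s η)² + (1+εη) |J^s T_μ^{−1/2}(D) v|² ] dx satisfies c₁ h₀ ‖(η,v)‖_{V^s_μ}² ≤ E_s(η,v) ≤ c₂ (1 + ε‖η‖_{L^∞} + ε‖v‖_{L^∞}) ‖(η,v)‖_{V^s_μ}². -/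

import Mathlib

noncomputable section

open MeasureTheory SchwartzMap
open scoped FourierTransform ENNReal

/-- The plane `ℝ²` as a Euclidean space. -/
abbrev E2 := EuclideanSpace ℝ (Fin 2)

/-- The Japanese bracket `⟨x⟩ = (1 + x²)^{1/2}`. -/
def jap (x : ℝ) : ℝ := (1 + x ^ 2) ^ ((1 : ℝ) / 2)

/-- The radial symbol `T_μ(ξ) = tanh(√μ |ξ|)/(√μ |ξ|)` for `ξ ≠ 0`, with value `1` at `0`,
expressed through `r = |ξ|`. -/
def Tsymb (μ r : ℝ) : ℝ :=
  if r = 0 then 1 else Real.tanh (Real.sqrt μ * r) / (Real.sqrt μ * r)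

/-- Complexification of a real-valued function on `ℝ²`. -/
def cc2 (f : E2 → ℝ) : E2 → ℂ := fun x => (f x : ℂ)

/-- Generic Fourier multiplier `a(D) g = (a(ξ) ĝ(ξ))^∨` with real symbol `a` on `ℝ²`. -/
def fmul2 (a : E2 → ℝ) (g : E2 → ℂ) : E2 → ℂ :=
  𝓕⁻ (fun ξ : E2 => ((a ξ : ℝ) : ℂ) * 𝓕 g ξ)

/-- The Bessel potential `J^s`, with symbol `⟨ξ⟩^s`. -/
def bessel2 (s : ℝ) (g : E2 → ℂ) : E2 → ℂ := fmul2 (fun ξ => jap ‖ξ‖ ^ s) g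

/-- The operator `J^s T_μ^{−1/2}(D)`, with symbol `⟨ξ⟩^s T_μ(ξ)^{−1/2}`. -/
def JTinv2 (μ s : ℝ) (g : E2 → ℂ) : E2 → ℂ :=
  fmul2 (fun ξ => jap ‖ξ‖ ^ s * Tsymb μ ‖ξ‖ ^ (-(1 : ℝ) / 2)) g

/-- The `H^s`-norm `‖f‖_{H^s} = ‖⟨ξ⟩^s f̂‖_{L²}`. -/
def HsN2 (s : ℝ) (f : E2 → ℂ) : ℝ≥0∞ :=
  eLpNorm (fun ξ : E2 => jap ‖ξ‖ ^ s * ‖𝓕 f ξ‖) 2 volume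

/-- The `H^s`-norm of `|D|^{1/2} f`, that is `‖⟨ξ⟩^s |ξ|^{1/2} f̂‖_{L²}`. -/
def HsDN2 (s : ℝ) (f : E2 → ℂ) : ℝ≥0∞ :=
  eLpNorm (fun ξ : E2 => jap ‖ξ‖ ^ s * ‖ξ‖ ^ ((1 : ℝ) / 2) * ‖𝓕 f ξ‖) 2 volume

/-- The squared `V^s_μ`-norm
`‖(η,v)‖_{V^s_μ}² = ‖η‖_{H^s}² + ‖v‖_{H^s}² + √μ ‖|D|^{1/2} v‖_{H^s}²`. -/
def Vsq (μ s : ℝ) (η v₁ v₂ : E2 → ℝ) : ℝ≥0∞ :=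
  HsN2 s (cc2 η) ^ 2 + HsN2 s (cc2 v₁) ^ 2 + HsN2 s (cc2 v₂) ^ 2 +
    ENNReal.ofReal (Real.sqrt μ) * (HsDN2 s (cc2 v₁) ^ 2 + HsDN2 s (cc2 v₂) ^ 2)

/-- The energy `E_s(η,v) = ∫ (J^s η)² + (1+εη)|J^s T_μ^{−1/2}(D) v|² dx`. -/
def energyWB (μ s ε : ℝ) (η v₁ v₂ : E2 → ℝ) : ℝ≥0∞ :=
  ∫⁻ x : E2, ENNReal.ofReal
    (‖bessel2 s (cc2 η) x‖ ^ 2 +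
      (1 + ε * η x) *
        (‖JTinv2 μ s (cc2 v₁) x‖ ^ 2 + ‖JTinv2 μ s (cc2 v₂) x‖ ^ 2))

/-!
By Plancherel, the energy with `ε = 0` is the integral of `⟨ξ⟩^{2s} (|η̂|² + T_μ(ξ)⁻¹ |v̂|²)`. Since
`x ≤ (1 + x) tanh x ≤ 2 x` for `x ≥ 0`, the weight `T_μ(ξ)⁻¹` lies between half of `1 + √μ |ξ|` and
`1 + √μ |ξ|`, which is the weight of the velocity in `V^s_μ`. The factor `1 + εη` takes values
between `h₀` and `1 + ε ‖η‖_{L^∞}`, so restoring it changes the energy at most by these two factors.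
-/

lemma ae_eq_of_integral_schwartzMap_smul_eq {V F : Type*} [NormedAddCommGroup V]
    [NormedSpace ℝ V] [FiniteDimensional ℝ V] [MeasurableSpace V] [BorelSpace V]
    [NormedAddCommGroup F] [NormedSpace ℂ F] [CompleteSpace F] {μ : Measure V} {f f' : V → F}
    (hf : LocallyIntegrable f μ) (hf' : LocallyIntegrable f' μ)
    (h : ∀ g : 𝓢(V, ℂ), ∫ x, g x • f x ∂μ = ∫ x, g x • f' x ∂μ) : f =ᵐ[μ] f' := by
  refine ae_eq_of_integral_contDiff_smul_eq hf hf' fun g g_smooth g_cpt => ?_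
  have hsupp : HasCompactSupport (Complex.ofRealCLM ∘ g) := g_cpt.comp_left rfl
  have hsmooth : ContDiff ℝ (⊤ : ℕ∞) (Complex.ofRealCLM ∘ g) := by fun_prop
  simpa using h (hsupp.toSchwartzMap hsmooth)

section Plancherel

variable {V F : Type*} [NormedAddCommGroup V] [InnerProductSpace ℝ V] [FiniteDimensional ℝ V]
  [MeasurableSpace V] [BorelSpace V] [NormedAddCommGroup F]

lemma continuous_fourierInv [NormedSpace ℂ F] {f : V → F} (hf : Integrable f) :
    Continuous (𝓕⁻ f) :=
  VectorFourier.fourierIntegral_continuous (L := -innerₗ V) Real.continuous_fourierChar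
    (by simpa using! continuous_inner.neg) hf

lemma integral_smul_fourierInv_eq [NormedSpace ℂ F] [CompleteSpace F] {g : V → ℂ} {f : V → F}
    (hg : Integrable g) (hf : Integrable f) :
    ∫ x, g x • 𝓕⁻ f x = ∫ x, 𝓕⁻ g x • f x := by
  have hflip : (-innerₗ V).flip = -innerₗ V := by
    ext x y
    simp [real_inner_comm]
  have hself := VectorFourier.integral_fourierIntegral_smul_eq_flip (L := -innerₗ V)
    (μ := volume) (ν := volume) Real.continuous_fourierChar
    (by simpa using! continuous_inner.neg) hg hf
  rw [hflip] at hself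
  exact hself.symm

variable [InnerProductSpace ℂ F] [CompleteSpace F] {f : V → F}

lemma coeFn_fourierInv_toLp_ae_eq (hf : Integrable f) (hf₂ : MemLp f 2 volume) :
    (𝓕⁻ (hf₂.toLp f) : Lp (α := V) F 2 volume) =ᵐ[volume] 𝓕⁻ f := by
  refine ae_eq_of_integral_schwartzMap_smul_eq
    ((Lp.memLp _).locallyIntegrable one_le_two)
    (continuous_fourierInv hf).locallyIntegrable fun g => ?_
  calc ∫ x, g x • (𝓕⁻ (hf₂.toLp f) : Lp (α := V) F 2 volume) x
      = (𝓕⁻ (Lp.toTemperedDistribution (hf₂.toLp f))) g := by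
        rw [Lp.fourierInv_toTemperedDistribution_eq, Lp.toTemperedDistribution_apply]
    _ = ∫ x, (𝓕⁻ g) x • hf₂.toLp f x := by
        rw [TemperedDistribution.fourierInv_apply, Lp.toTemperedDistribution_apply]
    _ = ∫ x, (𝓕⁻ g) x • f x := by
        refine integral_congr_ae ?_
        filter_upwards [hf₂.coeFn_toLp] with x hx
        rw [hx]
    _ = ∫ x, g x • 𝓕⁻ f x := by
        rw [integral_smul_fourierInv_eq g.integrable hf, SchwartzMap.fourierInv_coe]

theorem eLpNorm_fourierInv_eq (hf : Integrable f) (hf₂ : MemLp f 2 volume) :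
    eLpNorm (𝓕⁻ f) 2 volume = eLpNorm f 2 volume := by
  have hnorm : ‖(𝓕⁻ (hf₂.toLp f) : Lp (α := V) F 2 volume)‖ = ‖hf₂.toLp f‖ :=
    (Lp.fourierTransformₗᵢ V F).symm.norm_map _
  rw [← eLpNorm_congr_ae (coeFn_fourierInv_toLp_ae_eq hf hf₂), ← eLpNorm_congr_ae hf₂.coeFn_toLp]
  rw [Lp.norm_def, Lp.norm_def] at hnorm
  exact (ENNReal.toReal_eq_toReal_iff' (Lp.eLpNorm_ne_top _) (Lp.eLpNorm_ne_top _)).1 hnorm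

end Plancherel

lemma eLpNorm_two_sq_eq_lintegral {α F : Type*} [MeasurableSpace α] [SeminormedAddGroup F]
    (f : α → F) (ν : Measure α) :
    eLpNorm f 2 ν ^ 2 = ∫⁻ x, ENNReal.ofReal (‖f x‖ ^ 2) ∂ν := by
  have h := eLpNorm_nnreal_pow_eq_lintegral (f := f) (p := 2) (μ := ν) two_ne_zero
  simp only [NNReal.coe_ofNat, ENNReal.coe_ofNat, ENNReal.rpow_ofNat] at h
  simp only [h, ENNReal.ofReal_pow (norm_nonneg _), ofReal_norm]

/-- A measurable real symbol dominated pointwise by a function of temperate growth. No smoothness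
is asked of the symbol itself, which spares us the derivatives of `T_μ^{-1/2}`; it is enough for
the symbol to map Schwartz functions into every `L^p`. -/
structure IsTemperatelyDominated {V : Type*} [NormedAddCommGroup V] [NormedSpace ℝ V]
    [MeasurableSpace V] (a : V → ℝ) : Prop where
  measurable : Measurable a
  exists_bound : ∃ b : V → ℝ, b.HasTemperateGrowth ∧ ∀ ξ, |a ξ| ≤ b ξ

namespace IsTemperatelyDominated

variable {V : Type*} [NormedAddCommGroup V] [NormedSpace ℝ V] [MeasurableSpace V]
  {a b : V → ℝ}

lemma mul (ha : IsTemperatelyDominated a) (hb : IsTemperatelyDominated b) :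
    IsTemperatelyDominated fun ξ => a ξ * b ξ := by
  obtain ⟨A, hA, haA⟩ := ha.exists_bound
  obtain ⟨B, hB, hbB⟩ := hb.exists_bound
  refine ⟨ha.measurable.mul hb.measurable, fun ξ => A ξ * B ξ, hA.mul hB, fun ξ => ?_⟩
  rw [abs_mul]
  exact mul_le_mul (haA ξ) (hbB ξ) (abs_nonneg _) ((abs_nonneg _).trans (haA ξ))

lemma memLp_mul [BorelSpace V] [SecondCountableTopology V] {ν : Measure V}
    [ν.HasTemperateGrowth] (ha : IsTemperatelyDominated a) (f : 𝓢(V, ℂ)) (p : ℝ≥0∞) :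
    MemLp (fun ξ => (a ξ : ℂ) * f ξ) p ν := by
  obtain ⟨B, hB, haB⟩ := ha.exists_bound
  refine ((SchwartzMap.smulLeftCLM ℂ B f).memLp p ν).mono
    ((Complex.measurable_ofReal.comp ha.measurable).aestronglyMeasurable.mul
      f.continuous.aestronglyMeasurable) (.of_forall fun ξ => ?_)
  rw [SchwartzMap.smulLeftCLM_apply_apply hB, norm_smul, norm_mul, Complex.norm_real]
  gcongr
  exact (haB ξ).trans (le_abs_self _)

end IsTemperatelyDominated

section Multiplier

variable {a : E2 → ℝ} (ha : IsTemperatelyDominated a) (g : 𝓢(E2, ℂ))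
include ha

lemma continuous_fmul2 : Continuous (fmul2 a g) := by
  refine continuous_fourierInv ?_
  rw [← SchwartzMap.fourier_coe]
  exact memLp_one_iff_integrable.1 (ha.memLp_mul (𝓕 g) 1)

lemma eLpNorm_fmul2 :
    eLpNorm (fmul2 a g) 2 volume = eLpNorm (fun ξ => a ξ * ‖𝓕 (⇑g) ξ‖) 2 volume := by
  unfold fmul2
  rw [← SchwartzMap.fourier_coe, eLpNorm_fourierInv_eq
    (memLp_one_iff_integrable.1 (ha.memLp_mul (𝓕 g) 1)) (ha.memLp_mul (𝓕 g) 2)]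
  exact eLpNorm_congr_norm_ae (.of_forall fun ξ => by simp)

end Multiplier

section Symbols

variable {V : Type*} [NormedAddCommGroup V] [InnerProductSpace ℝ V] [MeasurableSpace V]
  [OpensMeasurableSpace V]

lemma jap_pos (r : ℝ) : 0 < jap r := by
  unfold jap
  positivity

lemma isTemperatelyDominated_jap_rpow (s : ℝ) :
    IsTemperatelyDominated fun ξ : V => jap ‖ξ‖ ^ s := by
  have hjap : (fun ξ : V => jap ‖ξ‖ ^ s) = fun ξ => (1 + ‖ξ‖ ^ 2) ^ (1 / 2 * s) :=
    funext fun ξ => (Real.rpow_mul (by positivity) _ _).symm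
  refine ⟨by unfold jap; fun_prop, _,
    hjap ▸ Function.hasTemperateGrowth_one_add_norm_sq_rpow V (1 / 2 * s), fun ξ => ?_⟩
  exact (abs_of_nonneg (Real.rpow_nonneg (jap_pos _).le _)).le

lemma tanh_le_self {x : ℝ} (hx : 0 ≤ x) : Real.tanh x ≤ x := by
  rw [Real.tanh_eq_sinh_div_cosh, div_le_iff₀ (Real.cosh_pos x), mul_comm]
  have hderiv : ∀ y ∈ interior (Set.Icc 0 x), deriv Real.sinh y ≤ Real.cosh x := by
    intro y hy
    obtain ⟨hy₀, hyx⟩ := interior_subset hy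
    rwa [Real.deriv_sinh, Real.cosh_le_cosh, abs_of_nonneg hy₀, abs_of_nonneg hx]
  simpa using (convex_Icc 0 x).image_sub_le_mul_sub_of_deriv_le
    Real.continuous_sinh.continuousOn Real.differentiable_sinh.differentiableOn hderiv
    0 (Set.left_mem_Icc.2 hx) x (Set.right_mem_Icc.2 hx) hx

lemma one_add_mul_tanh_le_two_mul {x : ℝ} (hx : 0 ≤ x) : (1 + x) * Real.tanh x ≤ 2 * x := by
  nlinarith [tanh_le_self hx, Real.tanh_lt_one x]

lemma self_le_one_add_mul_tanh {x : ℝ} (hx : 0 ≤ x) : x ≤ (1 + x) * Real.tanh x := by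
  have hsinh : x ≤ Real.sinh x := Real.self_le_sinh_iff.2 hx
  have hexp : Real.cosh x - Real.sinh x ≤ 1 := by
    rw [Real.cosh_sub_sinh]
    exact Real.exp_le_one_iff.2 (by linarith)
  rw [Real.tanh_eq_sinh_div_cosh, mul_div_assoc', le_div_iff₀ (Real.cosh_pos x)]
  nlinarith

variable {μ r : ℝ}

lemma Tsymb_pos (hμ : 0 < μ) (hr : 0 ≤ r) : 0 < Tsymb μ r := by
  unfold Tsymb
  split_ifs with h
  · exact one_pos
  · have hx : 0 < √μ * r := by positivity
    have := self_le_one_add_mul_tanh hx.le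
    have : 0 < Real.tanh (√μ * r) := pos_of_mul_pos_right (hx.trans_le this) (by positivity)
    positivity

lemma inv_Tsymb_le (hμ : 0 < μ) (hr : 0 ≤ r) : (Tsymb μ r)⁻¹ ≤ 1 + √μ * r := by
  have hT := Tsymb_pos hμ hr
  rw [inv_le_iff_one_le_mul₀ hT]
  unfold Tsymb
  split_ifs with h
  · simp [h]
  · have hx : 0 < √μ * r := by positivity
    rw [mul_div_assoc', one_le_div hx]
    exact self_le_one_add_mul_tanh hx.le

lemma one_add_le_two_mul_inv_Tsymb (hμ : 0 < μ) (hr : 0 ≤ r) :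
    1 + √μ * r ≤ 2 * (Tsymb μ r)⁻¹ := by
  have hT := Tsymb_pos hμ hr
  rw [← div_eq_mul_inv, le_div_iff₀ hT]
  unfold Tsymb
  split_ifs with h
  · simp [h]
  · have hx : 0 < √μ * r := by positivity
    rw [mul_div_assoc', div_le_iff₀ hx]
    exact one_add_mul_tanh_le_two_mul hx.le

lemma Tsymb_rpow_neg_half_sq (hμ : 0 < μ) (hr : 0 ≤ r) :
    (Tsymb μ r ^ (-(1 : ℝ) / 2)) ^ 2 = (Tsymb μ r)⁻¹ := by
  rw [← Real.rpow_mul_natCast (Tsymb_pos hμ hr).le, ← Real.rpow_neg_one]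
  norm_num

lemma measurable_Tsymb (μ : ℝ) : Measurable (Tsymb μ) := by
  have htanh : Measurable Real.tanh := by
    rw [funext Real.tanh_eq_sinh_div_cosh]
    exact Real.measurable_sinh.div Real.measurable_cosh
  unfold Tsymb
  exact .ite (measurableSet_singleton 0) measurable_const (by fun_prop)

lemma isTemperatelyDominated_Tsymb_rpow_neg_half (hμ : 0 < μ) :
    IsTemperatelyDominated fun ξ : V => Tsymb μ ‖ξ‖ ^ (-(1 : ℝ) / 2) := by
  refine ⟨((measurable_Tsymb μ).comp measurable_norm).pow_const _,
    fun ξ => 2 + μ * ‖ξ‖ ^ 2, by fun_prop, fun ξ => abs_le_of_sq_le_sq ?_ (by positivity)⟩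
  rw [Tsymb_rpow_neg_half_sq hμ (norm_nonneg ξ)]
  have hx : (√μ * ‖ξ‖) ^ 2 = μ * ‖ξ‖ ^ 2 := by rw [mul_pow, Real.sq_sqrt hμ.le]
  calc (Tsymb μ ‖ξ‖)⁻¹ ≤ 1 + √μ * ‖ξ‖ := inv_Tsymb_le hμ (norm_nonneg ξ)
    _ ≤ 2 + μ * ‖ξ‖ ^ 2 := by nlinarith [sq_nonneg (√μ * ‖ξ‖ - 1)]
    _ ≤ (2 + μ * ‖ξ‖ ^ 2) ^ 2 := le_self_pow₀ (by nlinarith [sq_nonneg (√μ * ‖ξ‖)]) two_ne_zero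

lemma isTemperatelyDominated_JTinv2_symbol (s : ℝ) (hμ : 0 < μ) :
    IsTemperatelyDominated fun ξ : V => jap ‖ξ‖ ^ s * Tsymb μ ‖ξ‖ ^ (-(1 : ℝ) / 2) :=
  (isTemperatelyDominated_jap_rpow s).mul (isTemperatelyDominated_Tsymb_rpow_neg_half hμ)

end Symbols

/-- The contribution `‖v‖_{H^s}² + √μ ‖|D|^{1/2} v‖_{H^s}²` of one velocity component to the squared
`V^s_μ`-norm. -/
def velocitySq (μ s : ℝ) (v : E2 → ℂ) : ℝ≥0∞ :=
  HsN2 s v ^ 2 + ENNReal.ofReal (√μ) * HsDN2 s v ^ 2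

lemma Vsq_eq_add_velocitySq (μ s : ℝ) (η v₁ v₂ : E2 → ℝ) :
    Vsq μ s η v₁ v₂ =
      HsN2 s (cc2 η) ^ 2 + (velocitySq μ s (cc2 v₁) + velocitySq μ s (cc2 v₂)) := by
  unfold Vsq velocitySq
  ring

section Velocity

variable {μ : ℝ} (s : ℝ) (g : 𝓢(E2, ℂ))

lemma velocitySq_eq_lintegral (μ : ℝ) :
    velocitySq μ s g =
      ∫⁻ ξ : E2, ENNReal.ofReal ((1 + √μ * ‖ξ‖) * (jap ‖ξ‖ ^ s * ‖𝓕 (⇑g) ξ‖) ^ 2) := by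
  have hjap : Measurable fun ξ : E2 => jap ‖ξ‖ ^ s :=
    (isTemperatelyDominated_jap_rpow s).measurable
  have hfourier : Measurable (𝓕 (⇑g)) := by
    rw [← SchwartzMap.fourier_coe]
    exact (𝓕 g).continuous.measurable
  unfold velocitySq HsN2 HsDN2
  rw [eLpNorm_two_sq_eq_lintegral, eLpNorm_two_sq_eq_lintegral,
    ← lintegral_const_mul _ (by fun_prop), ← lintegral_add_left (by fun_prop)]
  refine lintegral_congr fun ξ => ?_
  have hsqrt : (‖ξ‖ ^ ((1 : ℝ) / 2)) ^ 2 = ‖ξ‖ := by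
    rw [← Real.sqrt_eq_rpow, Real.sq_sqrt (norm_nonneg ξ)]
  rw [← ENNReal.ofReal_mul (by positivity), ← ENNReal.ofReal_add (by positivity) (by positivity)]
  simp only [Real.norm_eq_abs, sq_abs, mul_pow, hsqrt]
  ring_nf

lemma eLpNorm_JTinv2_sq_eq_lintegral (hμ : 0 < μ) :
    eLpNorm (JTinv2 μ s g) 2 volume ^ 2 =
      ∫⁻ ξ : E2, ENNReal.ofReal ((Tsymb μ ‖ξ‖)⁻¹ * (jap ‖ξ‖ ^ s * ‖𝓕 (⇑g) ξ‖) ^ 2) := by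
  unfold JTinv2
  rw [eLpNorm_fmul2 (isTemperatelyDominated_JTinv2_symbol s hμ), eLpNorm_two_sq_eq_lintegral]
  refine lintegral_congr fun ξ => ?_
  rw [← Tsymb_rpow_neg_half_sq hμ (norm_nonneg ξ), Real.norm_eq_abs, sq_abs]
  ring_nf

lemma eLpNorm_JTinv2_sq_le_velocitySq (hμ : 0 < μ) :
    eLpNorm (JTinv2 μ s g) 2 volume ^ 2 ≤ velocitySq μ s g := by
  rw [eLpNorm_JTinv2_sq_eq_lintegral s g hμ, velocitySq_eq_lintegral]
  gcongr with ξ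
  exact inv_Tsymb_le hμ (norm_nonneg ξ)

lemma velocitySq_le_ofReal_two_mul_eLpNorm_JTinv2_sq (hμ : 0 < μ) :
    velocitySq μ s g ≤ ENNReal.ofReal 2 * eLpNorm (JTinv2 μ s g) 2 volume ^ 2 := by
  rw [eLpNorm_JTinv2_sq_eq_lintegral s g hμ, velocitySq_eq_lintegral,
    ← lintegral_const_mul' _ _ ENNReal.ofReal_ne_top]
  gcongr with ξ
  rw [← ENNReal.ofReal_mul zero_le_two, ← mul_assoc]
  gcongr
  exact one_add_le_two_mul_inv_Tsymb hμ (norm_nonneg ξ)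

end Velocity

section FlatEnergy

variable {μ : ℝ} (s : ℝ) (η v₁ v₂ : 𝓢(E2, ℝ))

lemma cc2_coe_eq_postcompCLM (f : 𝓢(E2, ℝ)) :
    cc2 f = f.postcompCLM (𝕜 := ℝ) Complex.ofRealCLM := by
  ext x
  simp [cc2]

lemma eLpNorm_bessel2_cc2 (f : 𝓢(E2, ℝ)) :
    eLpNorm (bessel2 s (cc2 f)) 2 volume = HsN2 s (cc2 f) := by
  rw [cc2_coe_eq_postcompCLM]
  exact eLpNorm_fmul2 (isTemperatelyDominated_jap_rpow s) _

lemma energyWB_zero (hμ : 0 < μ) :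
    energyWB μ s 0 η v₁ v₂ = HsN2 s (cc2 η) ^ 2 +
      (eLpNorm (JTinv2 μ s (cc2 v₁)) 2 volume ^ 2 +
        eLpNorm (JTinv2 μ s (cc2 v₂)) 2 volume ^ 2) := by
  have hbessel : Continuous (bessel2 s (cc2 η)) := by
    rw [cc2_coe_eq_postcompCLM]
    exact continuous_fmul2 (isTemperatelyDominated_jap_rpow s) _
  have hJT : Continuous (JTinv2 μ s (cc2 v₁)) := by
    rw [cc2_coe_eq_postcompCLM]
    exact continuous_fmul2 (isTemperatelyDominated_JTinv2_symbol s hμ) _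
  simp only [← eLpNorm_bessel2_cc2, eLpNorm_two_sq_eq_lintegral]
  rw [← lintegral_add_left (by fun_prop), ← lintegral_add_left (by fun_prop)]
  refine lintegral_congr fun x => ?_
  rw [zero_mul, add_zero, one_mul, ENNReal.ofReal_add (by positivity) (by positivity),
    ENNReal.ofReal_add (by positivity) (by positivity)]

lemma energyWB_zero_le_Vsq (hμ : 0 < μ) : energyWB μ s 0 η v₁ v₂ ≤ Vsq μ s η v₁ v₂ := by
  rw [energyWB_zero s η v₁ v₂ hμ, Vsq_eq_add_velocitySq]
  simp only [cc2_coe_eq_postcompCLM]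
  gcongr <;> exact eLpNorm_JTinv2_sq_le_velocitySq s _ hμ

lemma Vsq_le_ofReal_two_mul_energyWB_zero (hμ : 0 < μ) :
    Vsq μ s η v₁ v₂ ≤ ENNReal.ofReal 2 * energyWB μ s 0 η v₁ v₂ := by
  rw [energyWB_zero s η v₁ v₂ hμ, Vsq_eq_add_velocitySq, mul_add, mul_add]
  simp only [cc2_coe_eq_postcompCLM]
  gcongr
  · exact le_mul_of_one_le_left' (by simp)
  all_goals exact velocitySq_le_ofReal_two_mul_eLpNorm_JTinv2_sq s _ hμ

end FlatEnergy

section Comparison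

variable {ε h₀ : ℝ} (μ s : ℝ) {η : E2 → ℝ} (v₁ v₂ : E2 → ℝ)

lemma ofReal_mul_energyWB_zero_le (hh₀ : 0 ≤ h₀) (hh₁ : h₀ ≤ 1) (hη : ∀ x, h₀ ≤ 1 + ε * η x) :
    ENNReal.ofReal h₀ * energyWB μ s 0 η v₁ v₂ ≤ energyWB μ s ε η v₁ v₂ := by
  unfold energyWB
  rw [← lintegral_const_mul' _ _ ENNReal.ofReal_ne_top]
  gcongr with x
  rw [← ENNReal.ofReal_mul hh₀, zero_mul, add_zero, one_mul, mul_add]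
  gcongr
  · exact mul_le_of_le_one_left (sq_nonneg _) hh₁
  · exact hη x

lemma energyWB_le_ofReal_mul_energyWB_zero (hε : 0 ≤ ε) (hη : eLpNorm η ⊤ volume ≠ ⊤) :
    energyWB μ s ε η v₁ v₂ ≤
      ENNReal.ofReal (1 + ε * (eLpNorm η ⊤ volume).toReal) * energyWB μ s 0 η v₁ v₂ := by
  unfold energyWB
  rw [← lintegral_const_mul' _ _ ENNReal.ofReal_ne_top]
  refine lintegral_mono_ae ?_
  filter_upwards [enorm_ae_le_eLpNormEssSup η volume] with x hx
  have hbound : η x ≤ (eLpNorm η ⊤ volume).toReal := by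
    rw [← eLpNorm_exponent_top] at hx
    simpa using (le_abs_self _).trans (ENNReal.toReal_mono hη hx)
  have hone : 1 ≤ 1 + ε * (eLpNorm η ⊤ volume).toReal :=
    le_add_of_nonneg_right (by positivity)
  rw [← ENNReal.ofReal_mul (by positivity), zero_mul, add_zero, one_mul,
    mul_add (1 + ε * (eLpNorm η ⊤ volume).toReal)]
  gcongr
  exact le_mul_of_one_le_left (sq_nonneg _) hone

end Comparison

theorem energy_equiv_Vnorm_general (s : ℝ) {ε μ h₀ : ℝ} (hε : 0 ≤ ε) (hμ : 0 < μ)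
    (hh₀ : 0 ≤ h₀) (hh₁ : h₀ ≤ 1) (η v₁ v₂ : 𝓢(E2, ℝ)) (hη : ∀ x, h₀ ≤ 1 + ε * η x) :
    ENNReal.ofReal (1 / 2 * h₀) * Vsq μ s η v₁ v₂ ≤ energyWB μ s ε η v₁ v₂ ∧
      energyWB μ s ε η v₁ v₂ ≤
        ENNReal.ofReal (1 + ε * (eLpNorm η ⊤ volume).toReal) * Vsq μ s η v₁ v₂ := by
  constructor
  · calc ENNReal.ofReal (1 / 2 * h₀) * Vsq μ s η v₁ v₂
        ≤ ENNReal.ofReal (1 / 2 * h₀) * (ENNReal.ofReal 2 * energyWB μ s 0 η v₁ v₂) := by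
          gcongr
          exact Vsq_le_ofReal_two_mul_energyWB_zero s η v₁ v₂ hμ
      _ = ENNReal.ofReal h₀ * energyWB μ s 0 η v₁ v₂ := by
          rw [← mul_assoc, ← ENNReal.ofReal_mul (by positivity)]
          ring_nf
      _ ≤ energyWB μ s ε η v₁ v₂ := ofReal_mul_energyWB_zero_le μ s v₁ v₂ hh₀ hh₁ hη
  · refine (energyWB_le_ofReal_mul_energyWB_zero μ s v₁ v₂ hε (η.memLp_top volume).2.ne).trans ?_
    gcongr
    exact energyWB_zero_le_Vsq s η v₁ v₂ hμ

/-- Equivalence of the energy and the `V^s_μ`-norm (part of Proposition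
6.3): for `s > 2` there are `c₁, c₂ > 0`, depending only on `s`, such that for all
`ε, μ ∈ (0,1]`, `h₀ ∈ (0,1)` and Schwartz `(η, v)` with `1 + εη ≥ h₀`,
`c₁ h₀ ‖(η,v)‖_{V^s_μ}² ≤ E_s(η,v) ≤ c₂ (1 + ε‖η‖_{L^∞} + ε‖v‖_{L^∞}) ‖(η,v)‖_{V^s_μ}²`. -/
theorem energy_equiv_Vnorm (s : ℝ) (hs : 2 < s) :
    ∃ c₁ c₂ : ℝ, 0 < c₁ ∧ 0 < c₂ ∧
      ∀ ε μ h₀ : ℝ, 0 < ε → ε ≤ 1 → 0 < μ → μ ≤ 1 → 0 < h₀ → h₀ < 1 →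
        ∀ η v₁ v₂ : 𝓢(E2, ℝ),
          (∀ x : E2, h₀ ≤ 1 + ε * η x) →
          ENNReal.ofReal (c₁ * h₀) * Vsq μ s (⇑η) (⇑v₁) (⇑v₂)
              ≤ energyWB μ s ε (⇑η) (⇑v₁) (⇑v₂) ∧
            energyWB μ s ε (⇑η) (⇑v₁) (⇑v₂)
              ≤ ENNReal.ofReal
                  (c₂ * (1 + ε * (eLpNorm (⇑η) ⊤ volume).toReal +
                    ε * (eLpNorm (fun x => Real.sqrt ((v₁ x) ^ 2 + (v₂ x) ^ 2)) ⊤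
                          volume).toReal)) *
                Vsq μ s (⇑η) (⇑v₁) (⇑v₂) := by
  refine ⟨1 / 2, 1, by norm_num, one_pos, fun ε μ h₀ hε _ hμ _ hh₀ hh₁ η v₁ v₂ hη => ?_⟩
  obtain ⟨hlower, hupper⟩ := energy_equiv_Vnorm_general s hε.le hμ hh₀.le hh₁.le η v₁ v₂ hη
  refine ⟨hlower, hupper.trans ?_⟩
  gcongr ENNReal.ofReal ?_ * _
  rw [one_mul]
  exact le_add_of_nonneg_right (by positivity)
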